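/- Let m ≥ n ≥ 1 and m ≥ s ≥ r ≥ 0 with n ≥ r be integers, let c ≥ 0 be a real number, and let A be an m×n real matrix. Let Q be a random s×r real matrix satisfying minor-orthogonality: for all S, U ⊆ {1,…,s} and T, V ⊆ {1,…,r} with |S| = |T| = k and |U| = |V| = ℓ, E[[Q]_{S,T}·[Q]_{U,V}] = (1/binom(s,k))·1_{S=U}·1_{T=V}. Let Q̃ denote the m×n matrix with Q in its top-left s×r block and zeros elsewhere. Writing E[ det( x·I_n + (A + √c·Q̃)ᵀ(A + √c·Q̃) ) ] = Σ_{i=0}^n x^{n−i} c_i(A), one has c_i(A) = Σ_{j,p,q} [ binom(s−p, i−j)·binom(r−q, i−j) / binom(s, i−j) ] · c^{i−j} · A^j_{p,q}, where A^j_{p,q} = Σ [A]_{X,Y}² with the sum over X ⊆ {1,…,m}, Y ⊆ {1,…,n} with |X| = |Y| = j, |X ∩ {1,…,s}| = p, and |Y ∩ {1,…,r}| = q. -/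

import Mathlib

open Polynomial Matrix MeasureTheory

noncomputable instance matMeasurableSpace (m n : ℕ) :
    MeasurableSpace (Matrix (Fin m) (Fin n) ℝ) :=
  MeasurableSpace.pi

/-- The minor `[C]_{S,T}` : the determinant of the submatrix of `C` with rows indexed by
`S` and columns by `T` (in increasing order); junk value `0` if `|S| ≠ |T|`, and the empty
minor equals `1`. -/
noncomputable def minor {m n : ℕ} (C : Matrix (Fin m) (Fin n) ℝ)
    (S : Finset (Fin m)) (T : Finset (Fin n)) : ℝ :=
  if h : S.card = T.card then
    (Matrix.of fun (i j : Fin S.card) =>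
      C (S.orderEmbOfFin rfl i) (T.orderEmbOfFin h.symm j)).det
  else 0

/-- A random `s × t` real matrix (given by its distribution `μ`) is *minor-orthogonal* if
`E[[Q]_{S,T}·[Q]_{U,V}] = 1_{S=U}·1_{T=V} / binom(s,|S|)` for all index sets with
`|S| = |T|` and `|U| = |V|`. -/
def MinorOrthogonal {s t : ℕ} (μ : Measure (Matrix (Fin s) (Fin t) ℝ)) : Prop :=
  ∀ (S U : Finset (Fin s)) (T V : Finset (Fin t)),
    S.card = T.card → U.card = V.card →
    ∫ Q, minor Q S T * minor Q U V ∂μ =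
      if S = U ∧ T = V then ((s.choose S.card : ℕ) : ℝ)⁻¹ else 0

/-- `A^j_{p,q} = Σ [A]_{X,Y}²`, the sum over row sets `X` and column sets `Y` with
`|X| = |Y| = j`, `|X ∩ {1,…,s}| = p` and `|Y ∩ {1,…,r}| = q`. -/
noncomputable def Apq {m n : ℕ} (A : Matrix (Fin m) (Fin n) ℝ) (s r j p q : ℕ) : ℝ :=
  ∑ X : Finset (Fin m), ∑ Y : Finset (Fin n),
    if X.card = j ∧ Y.card = j ∧
        (X.filter (fun i : Fin m => (i : ℕ) < s)).card = p ∧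
        (Y.filter (fun i : Fin n => (i : ℕ) < r)).card = q then
      (minor A X Y) ^ 2
    else 0

/-- The `m × n` matrix with the `s × r` matrix `Q` in its top-left block and zeros
elsewhere. -/
def topLeft {m n s r : ℕ} (Q : Matrix (Fin s) (Fin r) ℝ) : Matrix (Fin m) (Fin n) ℝ :=
  Matrix.of fun i j =>
    if hi : (i : ℕ) < s then if hj : (j : ℕ) < r then Q ⟨i, hi⟩ ⟨j, hj⟩ else 0 else 0

/-- `det(x·I + N)` as a polynomial in `x`. -/
noncomputable def detXI {n : ℕ} (N : Matrix (Fin n) (Fin n) ℝ) : Polynomial ℝ :=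
  Matrix.det ((Polynomial.X : Polynomial ℝ) • (1 : Matrix (Fin n) (Fin n) (Polynomial ℝ)) +
    N.map Polynomial.C)

lemma minor_eq_det_submatrix {m n k : ℕ} (C : Matrix (Fin m) (Fin n) ℝ)
    {S : Finset (Fin m)} {T : Finset (Fin n)} (hS : S.card = k) (hT : T.card = k) :
    minor C S T = (C.submatrix (S.orderEmbOfFin hS) (T.orderEmbOfFin hT)).det := by
  subst hS
  rw [minor, dif_pos hT.symm]
  rfl

lemma minor_of_card_ne {m n : ℕ} (C : Matrix (Fin m) (Fin n) ℝ)
    {S : Finset (Fin m)} {T : Finset (Fin n)} (h : S.card ≠ T.card) : minor C S T = 0 :=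
  dif_neg h

lemma Finset.orderEmbOfFin_map {a b k : ℕ} (f : Fin a ↪o Fin b) (S : Finset (Fin a))
    (h : S.card = k) (h' : (S.map f.toEmbedding).card = k) (i : Fin k) :
    (S.map f.toEmbedding).orderEmbOfFin h' i = f (S.orderEmbOfFin h i) := by
  have := Finset.orderEmbOfFin_unique h' (f := fun i => f (S.orderEmbOfFin h i))
    (fun x => by simp) (f.strictMono.comp (S.orderEmbOfFin h).strictMono)
  exact (congrFun this i).symm

/-- Minors of a submatrix along increasing maps are minors of the matrix. -/
lemma minor_map {a b m n : ℕ} (C : Matrix (Fin m) (Fin n) ℝ) (f : Fin a ↪o Fin m)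
    (g : Fin b ↪o Fin n) (S : Finset (Fin a)) (T : Finset (Fin b)) :
    minor C (S.map f.toEmbedding) (T.map g.toEmbedding) = minor (C.submatrix f g) S T := by
  by_cases h : S.card = T.card
  · rw [minor_eq_det_submatrix (k := S.card) _ (by simp) (by simp [h]),
      minor_eq_det_submatrix (k := S.card) _ rfl h.symm]
    congr 1
    ext i j
    simp only [submatrix_apply]
    rw [Finset.orderEmbOfFin_map f S rfl, Finset.orderEmbOfFin_map g T h.symm]
  · rw [minor_of_card_ne _ (by simpa using h), minor_of_card_ne _ h]

lemma minor_smul {m n : ℕ} (a : ℝ) (C : Matrix (Fin m) (Fin n) ℝ)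
    (S : Finset (Fin m)) (T : Finset (Fin n)) :
    minor (a • C) S T = a ^ S.card * minor C S T := by
  by_cases h : S.card = T.card
  · rw [minor_eq_det_submatrix (k := S.card) _ rfl h.symm,
      minor_eq_det_submatrix (k := S.card) _ rfl h.symm]
    have := det_smul (C.submatrix (S.orderEmbOfFin rfl) (T.orderEmbOfFin h.symm)) a
    rwa [Fintype.card_fin] at this
  · simp [minor_of_card_ne _ h]

lemma minor_eq_zero_of_row {m n : ℕ} (C : Matrix (Fin m) (Fin n) ℝ)
    {S : Finset (Fin m)} (T : Finset (Fin n)) {i : Fin m} (hi : i ∈ S) (h : ∀ j, C i j = 0) :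
    minor C S T = 0 := by
  by_cases hc : S.card = T.card
  · rw [minor_eq_det_submatrix (k := S.card) _ rfl hc.symm]
    obtain ⟨a, rfl⟩ : i ∈ Set.range (S.orderEmbOfFin rfl) := by simpa using hi
    exact det_eq_zero_of_row_eq_zero a fun j => h _
  · exact minor_of_card_ne _ hc

lemma minor_eq_zero_of_column {m n : ℕ} (C : Matrix (Fin m) (Fin n) ℝ)
    (S : Finset (Fin m)) {T : Finset (Fin n)} {j : Fin n} (hj : j ∈ T) (h : ∀ i, C i j = 0) :
    minor C S T = 0 := by
  by_cases hc : S.card = T.card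
  · rw [minor_eq_det_submatrix (k := S.card) _ rfl hc.symm]
    obtain ⟨a, rfl⟩ : j ∈ Set.range (T.orderEmbOfFin hc.symm) := by simpa using hj
    exact det_eq_zero_of_column_eq_zero a fun i => h _
  · exact minor_of_card_ne _ hc

/-- Keep the entries of `M` on `P × T`, those of `N` on `Pᶜ × Tᶜ`, and put zeros elsewhere. -/
def blockMix {R ι : Type*} [Zero R] [DecidableEq ι] (M N : Matrix ι ι R) (P T : Finset ι) :
    Matrix ι ι R :=
  Matrix.of fun i j =>
    if i ∈ P then if j ∈ T then M i j else 0 else if j ∈ T then 0 else N i j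

lemma prod_blockMix {R ι : Type*} [CommRing R] [Fintype ι] [DecidableEq ι]
    (M N : Matrix ι ι R) (P T : Finset ι) (σ : Equiv.Perm ι) :
    ∏ i, blockMix M N P T (σ i) i =
      if P = T.map σ.toEmbedding then (∏ i ∈ T, M (σ i) i) * ∏ i ∈ Tᶜ, N (σ i) i else 0 := by
  split_ifs with h
  · subst h
    rw [← Finset.prod_mul_prod_compl T]
    congr 1
    · exact Finset.prod_congr rfl fun i hi => by simp [blockMix, hi]
    · exact Finset.prod_congr rfl fun i hi => by
        simp [blockMix, Finset.mem_compl.mp hi]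
  · obtain ⟨i, hi⟩ : ∃ i, ¬ (σ i ∈ P ↔ i ∈ T) := by
      by_contra! hcon
      refine h (Finset.ext fun a => ?_)
      rw [← σ.apply_symm_apply a, hcon]
      simp
    refine Finset.prod_eq_zero (Finset.mem_univ i) ?_
    simp only [blockMix, of_apply]
    split_ifs <;> simp_all

lemma det_add_eq_sum_det_blockMix {R ι : Type*} [CommRing R] [Fintype ι] [DecidableEq ι]
    (M N : Matrix ι ι R) :
    (M + N).det = ∑ P : Finset ι, ∑ T : Finset ι, (blockMix M N P T).det := by
  simp only [det_apply', prod_blockMix]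
  rw [Finset.sum_comm]
  simp_rw [Finset.sum_comm (s := (Finset.univ : Finset (Finset ι)))
    (t := (Finset.univ : Finset (Equiv.Perm ι)))]
  refine Finset.sum_congr rfl fun σ _ => ?_
  simp [Fintype.prod_add, Finset.mul_sum]

lemma det_submatrix_equiv_equiv {R ι κ : Type*} [CommRing R] [Fintype ι] [DecidableEq ι]
    [Fintype κ] [DecidableEq κ] (e f : κ ≃ ι) (M : Matrix ι ι R) :
    (M.submatrix e f).det = (Equiv.Perm.sign (e.symm.trans f) : ℤ) * M.det := by
  rw [← det_permute' (e.symm.trans f) M,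
    ← det_submatrix_equiv_self e]
  congr 1
  ext i j
  simp

lemma exists_det_blockMix_eq {k : ℕ} (P T : Finset (Fin k)) :
    ∃ ε : ℝ, ε ^ 2 = 1 ∧ ∀ M N : Matrix (Fin k) (Fin k) ℝ,
      (blockMix M N P T).det = ε * (minor M P T * minor N Pᶜ Tᶜ) := by
  by_cases h : P.card = T.card
  · have h' : Pᶜ.card = Tᶜ.card := by simp [Finset.card_compl, h]
    let e := finSumEquivOfFinset (s := P) rfl rfl
    let f := finSumEquivOfFinset (s := T) h.symm h'.symm
    have hε : ((Equiv.Perm.sign (e.symm.trans f) : ℤ) : ℝ) ^ 2 = 1 := by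
      rcases Int.units_eq_one_or (Equiv.Perm.sign (e.symm.trans f)) with h | h <;> simp [h]
    refine ⟨(Equiv.Perm.sign (e.symm.trans f) : ℤ), hε, fun M N => ?_⟩
    have key : (blockMix M N P T).submatrix e f = fromBlocks
        (M.submatrix (P.orderEmbOfFin rfl) (T.orderEmbOfFin h.symm)) 0 0
        (N.submatrix (Pᶜ.orderEmbOfFin rfl) (Tᶜ.orderEmbOfFin h'.symm)) := by
      have hP : ∀ i, Pᶜ.orderEmbOfFin rfl i ∉ P := fun i =>
        Finset.mem_compl.mp (Finset.orderEmbOfFin_mem _ _ _)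
      have hT : ∀ i, Tᶜ.orderEmbOfFin h'.symm i ∉ T := fun i =>
        Finset.mem_compl.mp (Finset.orderEmbOfFin_mem _ _ _)
      ext i j
      rcases i with i | i <;> rcases j with j | j <;> simp [blockMix, e, f, hP, hT]
    have hdet := det_submatrix_equiv_equiv e f (blockMix M N P T)
    rw [key, det_fromBlocks_zero₂₁, ← minor_eq_det_submatrix, ← minor_eq_det_submatrix] at hdet
    rw [hdet, ← mul_assoc, ← sq, hε, one_mul]
  · refine ⟨1, one_pow 2, fun M N => ?_⟩
    rw [minor_of_card_ne _ h, det_apply', zero_mul, mul_zero]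
    refine Finset.sum_eq_zero fun σ _ => ?_
    rw [prod_blockMix, if_neg, mul_zero]
    rintro rfl
    simp at h

lemma Finset.sum_powerset_map {α β M : Type*} [AddCommMonoid M] (f : α ↪ β)
    (S : Finset α) (F : Finset β → M) :
    ∑ X ∈ (S.map f).powerset, F X = ∑ P ∈ S.powerset, F (P.map f) := by
  classical
  symm
  refine Finset.sum_bij (fun P _ => P.map f) (fun P hP => ?_)
    (fun P _ Q _ h => Finset.map_injective f h) (fun X hX => ?_) fun _ _ => rfl
  · simpa using hP
  · obtain ⟨P, hP, rfl⟩ := Finset.subset_map_iff.mp (Finset.mem_powerset.mp hX)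
    exact ⟨P, Finset.mem_powerset.mpr hP, rfl⟩

/-- Expansion of a minor of a sum along pairs of complementary minors, up to signs. -/
lemma exists_minor_add_eq {m n k : ℕ} {X : Finset (Fin m)} {Y : Finset (Fin n)}
    (hX : X.card = k) (hY : Y.card = k) :
    ∃ ε : Finset (Fin m) → Finset (Fin n) → ℝ, (∀ P T, ε P T ^ 2 = 1) ∧
      ∀ A B : Matrix (Fin m) (Fin n) ℝ, minor (A + B) X Y =
        ∑ P ∈ X.powerset, ∑ T ∈ Y.powerset,
          ε P T * (minor A P T * minor B (X \ P) (Y \ T)) := by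
  choose ε hε hdet using fun P T : Finset (Fin k) => exists_det_blockMix_eq P T
  obtain ⟨f, hf⟩ : ∃ f, f = X.orderEmbOfFin hX := ⟨_, rfl⟩
  obtain ⟨g, hg⟩ : ∃ g, g = Y.orderEmbOfFin hY := ⟨_, rfl⟩
  have hXf : X = Finset.univ.map f.toEmbedding := by simp [hf]
  have hYg : Y = Finset.univ.map g.toEmbedding := by simp [hg]
  have hpre : ∀ {l : ℕ} (f : Fin k ↪o Fin l) (P : Finset (Fin k)),
      Finset.univ.filter (fun i => f i ∈ P.map f.toEmbedding) = P := by
    intro l f P; ext i; simp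
  refine ⟨fun P T => ε (Finset.univ.filter (f · ∈ P)) (Finset.univ.filter (g · ∈ T)),
    fun _ _ => hε _ _, fun A B => ?_⟩
  rw [minor_eq_det_submatrix _ hX hY, ← hf, ← hg, submatrix_add, Pi.add_apply, Pi.add_apply,
    det_add_eq_sum_det_blockMix, hXf, hYg, Finset.sum_powerset_map, Finset.powerset_univ]
  refine Finset.sum_congr rfl fun P _ => ?_
  rw [Finset.sum_powerset_map, Finset.powerset_univ]
  refine Finset.sum_congr rfl fun T _ => ?_
  beta_reduce
  rw [hdet, hpre, hpre, ← Finset.map_sdiff, ← Finset.map_sdiff, minor_map, minor_map,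
    ← Finset.compl_eq_univ_sdiff, ← Finset.compl_eq_univ_sdiff]

/-- The Cauchy–Binet formula. -/
lemma det_mul_eq_sum_det_submatrix {R : Type*} [CommRing R] {k m : ℕ}
    (C : Matrix (Fin k) (Fin m) R) (D : Matrix (Fin m) (Fin k) R) :
    (C * D).det = ∑ X : {X : Finset (Fin m) // X.card = k},
      (C.submatrix id (X.1.orderEmbOfFin X.2)).det *
        (D.submatrix (X.1.orderEmbOfFin X.2) id).det := by
  have expand : (C * D).det = ∑ f : Fin k → Fin m,
      (∏ i, C i (f i)) * (D.submatrix f id).det := by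
    have hrow : C * D = fun i => ∑ a, C i a • D a := by
      ext i j
      simp [mul_apply]
    rw [hrow]
    have := (detRowAlternating (n := Fin k) (R := R)).toMultilinearMap.map_sum
      (g := fun i a => C i a • D a)
    refine this.trans (Finset.sum_congr rfl fun f _ => ?_)
    exact (detRowAlternating (n := Fin k) (R := R)).toMultilinearMap.map_smul_univ
      (fun i => C i (f i)) (fun i => D (f i))
  have hterm : ∀ X : {X : Finset (Fin m) // X.card = k},
      (C.submatrix id (X.1.orderEmbOfFin X.2)).det * (D.submatrix (X.1.orderEmbOfFin X.2) id).det =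
        ∑ σ : Equiv.Perm (Fin k), (∏ i, C i (X.1.orderEmbOfFin X.2 (σ i))) *
          (D.submatrix (X.1.orderEmbOfFin X.2 ∘ σ) id).det := by
    intro X
    rw [← det_transpose (C.submatrix _ _), det_apply', Finset.sum_mul]
    refine Finset.sum_congr rfl fun σ _ => ?_
    have := det_permute σ (D.submatrix (X.1.orderEmbOfFin X.2) id)
    rw [submatrix_submatrix] at this
    simp only [Function.comp_id] at this
    rw [this]
    simp
    ring
  rw [expand]
  simp_rw [hterm]
  rw [← Fintype.sum_prod_type']
  symm
  refine Finset.sum_of_injOn (fun p => p.1.1.orderEmbOfFin p.1.2 ∘ p.2) ?_ (fun _ _ => by simp)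
    ?_ (fun _ _ => rfl)
  · rintro ⟨⟨X, hX⟩, σ⟩ - ⟨⟨Y, hY⟩, τ⟩ - hf
    have hXY : X = Y := by
      have := congrArg Set.range hf
      simpa [Set.range_comp, σ.range_eq_univ, τ.range_eq_univ] using this
    subst hXY
    have : σ = τ := Equiv.ext fun i => (X.orderEmbOfFin hX).injective (congrFun hf i)
    rw [this]
  · intro f _ hf
    by_cases hinj : Function.Injective f
    · refine absurd ?_ hf
      have hX : (Finset.univ.image f).card = k := by
        simp [Finset.card_image_of_injective _ hinj]
      let e := (Finset.univ.image f).orderIsoOfFin hX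
      let τ : Fin k → Fin k := fun i => e.symm ⟨f i, by simp⟩
      have hτ : Function.Bijective τ := Finite.injective_iff_bijective.mp fun i j hij =>
        hinj (by simpa [τ] using hij)
      refine ⟨⟨⟨_, hX⟩, Equiv.ofBijective τ hτ⟩, by simp, funext fun i => ?_⟩
      change ((e (e.symm _) : _) : Fin m) = _
      simp
    · obtain ⟨i, j, hij, hne⟩ : ∃ i j, f i = f j ∧ i ≠ j := by
        simpa [Function.Injective] using hinj
      rw [det_zero_of_row_eq hne (by ext; simp [hij]), mul_zero]

lemma detXI_coeff {n : ℕ} (N : Matrix (Fin n) (Fin n) ℝ) {i : ℕ} (hi : i ≤ n) :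
    (detXI N).coeff (n - i) = ∑ Y ∈ Finset.univ.powersetCard i, minor N Y Y := by
  have hchar : detXI N = (-N).charpoly := by
    rw [detXI, charpoly, charmatrix]
    congr 1
    ext a b
    simp [Matrix.one_apply, Matrix.scalar_apply, Matrix.diagonal_apply]
  have := charpoly_coeff_eq_sum_minors (-N) i (by simpa using hi)
  rw [Fintype.card_fin] at this
  rw [hchar, this, Finset.mul_sum]
  refine Finset.sum_congr rfl fun Y hY => ?_
  have hY' : Y.card = i := (Finset.mem_powersetCard.mp hY).2
  have hneg : (-N).submatrix (Subtype.val : Y → Fin n) (Subtype.val : Y → Fin n) =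
    -(N.submatrix Subtype.val Subtype.val) := rfl
  rw [hneg, det_neg, Fintype.card_coe, hY', ← mul_assoc, ← mul_pow,
    minor_eq_det_submatrix N hY' hY',
    ← det_submatrix_equiv_self (Y.orderIsoOfFin hY').toEquiv]
  simp
  rfl

lemma detXI_transpose_mul_self_coeff {m n : ℕ} (B : Matrix (Fin m) (Fin n) ℝ) {i : ℕ}
    (hi : i ≤ n) :
    (detXI (Bᵀ * B)).coeff (n - i) =
      ∑ X ∈ Finset.univ.powersetCard i, ∑ Y ∈ Finset.univ.powersetCard i, minor B X Y ^ 2 := by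
  rw [detXI_coeff _ hi, Finset.sum_comm]
  refine Finset.sum_congr rfl fun Y hY => ?_
  have hY' : Y.card = i := (Finset.mem_powersetCard.mp hY).2
  rw [minor_eq_det_submatrix _ hY' hY',
    submatrix_mul _ _ _ id _ Function.bijective_id, det_mul_eq_sum_det_submatrix,
    Finset.sum_subtype (Finset.univ.powersetCard i) (p := fun X => X.card = i) (by simp)]
  refine Finset.sum_congr rfl fun X _ => ?_
  rw [minor_eq_det_submatrix _ X.2 hY', sq]
  congr 1
  exact det_transpose (B.submatrix _ _)

lemma measurable_minor {s r : ℕ} (S : Finset (Fin s)) (T : Finset (Fin r)) :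
    Measurable fun Q : Matrix (Fin s) (Fin r) ℝ => minor Q S T := by
  by_cases h : S.card = T.card
  · simp only [minor, dif_pos h, det_apply', of_apply]
    refine Finset.measurable_sum _ fun σ _ => Measurable.const_mul ?_ _
    refine Finset.measurable_prod _ fun i _ => ?_
    exact (measurable_pi_apply _).comp (measurable_pi_apply _)
  · simp only [minor, dif_neg h]
    exact measurable_const

/-- Second moments of minors of a minor-orthogonal matrix exist: the prescribed value
`E[[Q]_{S,T}²]` is nonzero. -/
lemma MinorOrthogonal.memLp_minor {s r : ℕ} {μ : Measure (Matrix (Fin s) (Fin r) ℝ)}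
    (hμ : MinorOrthogonal μ) (S : Finset (Fin s)) (T : Finset (Fin r)) :
    MemLp (fun Q => minor Q S T) 2 μ := by
  by_cases h : S.card = T.card
  · rw [memLp_two_iff_integrable_sq (measurable_minor S T).aestronglyMeasurable]
    refine Integrable.of_integral_ne_zero ?_
    simp_rw [sq]
    rw [hμ S S T T h h, if_pos ⟨rfl, rfl⟩]
    have hS : S.card ≤ s := by simpa using S.card_le_univ
    exact inv_ne_zero (Nat.cast_ne_zero.mpr (Nat.choose_pos hS).ne')
  · simp [minor_of_card_ne _ h]

lemma Finset.exists_map_castLE_iff {s m : ℕ} (h : s ≤ m) (S : Finset (Fin m)) :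
    (∃ S' : Finset (Fin s), S'.map (Fin.castLEOrderEmb h).toEmbedding = S) ↔
      ∀ i ∈ S, (i : ℕ) < s := by
  constructor
  · rintro ⟨S', rfl⟩ i hi
    obtain ⟨a, -, rfl⟩ := Finset.mem_map.mp hi
    exact a.2
  · intro hS
    refine ⟨Finset.univ.filter (Fin.castLE h · ∈ S), Finset.ext fun i => ?_⟩
    simp only [Finset.mem_map, Finset.mem_filter, Finset.mem_univ, true_and]
    constructor
    · rintro ⟨a, ha, rfl⟩
      exact ha
    · exact fun hi => ⟨⟨i, hS i hi⟩, hi, rfl⟩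

/-- The second moment of the minor of `√c·Q̃` with rows `S` and columns `T`. -/
noncomputable def topLeftWeight {m n : ℕ} (s r : ℕ) (c : ℝ) (S : Finset (Fin m))
    (T : Finset (Fin n)) : ℝ :=
  if S.card = T.card ∧ (∀ i ∈ S, (i : ℕ) < s) ∧ (∀ j ∈ T, (j : ℕ) < r) then
    c ^ S.card / (s.choose S.card : ℝ) else 0

lemma minor_topLeft_map {m n s r : ℕ} (hsm : s ≤ m) (hrn : r ≤ n)
    (Q : Matrix (Fin s) (Fin r) ℝ) (S : Finset (Fin s)) (T : Finset (Fin r)) :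
    minor (topLeft Q : Matrix (Fin m) (Fin n) ℝ) (S.map (Fin.castLEOrderEmb hsm).toEmbedding)
      (T.map (Fin.castLEOrderEmb hrn).toEmbedding) = minor Q S T := by
  rw [minor_map]
  congr 1
  ext i j
  simp [topLeft]

lemma minor_topLeft_eq_zero {m n s r : ℕ} (Q : Matrix (Fin s) (Fin r) ℝ)
    {S : Finset (Fin m)} {T : Finset (Fin n)}
    (h : ¬ ((∀ i ∈ S, (i : ℕ) < s) ∧ ∀ j ∈ T, (j : ℕ) < r)) :
    minor (topLeft Q : Matrix (Fin m) (Fin n) ℝ) S T = 0 := by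
  rw [not_and_or] at h
  push Not at h
  rcases h with ⟨i, hi, his⟩ | ⟨j, hj, hjr⟩
  · exact minor_eq_zero_of_row _ _ hi fun j => by simp [topLeft, his.not_gt]
  · exact minor_eq_zero_of_column _ _ hj fun i => by simp [topLeft, hjr.not_gt]

lemma MinorOrthogonal.memLp_minor_topLeft {m n s r : ℕ} (hsm : s ≤ m) (hrn : r ≤ n) (a : ℝ)
    {μ : Measure (Matrix (Fin s) (Fin r) ℝ)} (hμ : MinorOrthogonal μ)
    (S : Finset (Fin m)) (T : Finset (Fin n)) :
    MemLp (fun Q => minor (a • topLeft Q : Matrix (Fin m) (Fin n) ℝ) S T) 2 μ := by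
  simp_rw [minor_smul]
  refine MemLp.const_mul ?_ _
  by_cases h : (∀ i ∈ S, (i : ℕ) < s) ∧ ∀ j ∈ T, (j : ℕ) < r
  · obtain ⟨S, rfl⟩ := (Finset.exists_map_castLE_iff hsm S).mpr h.1
    obtain ⟨T, rfl⟩ := (Finset.exists_map_castLE_iff hrn T).mpr h.2
    simp_rw [minor_topLeft_map]
    exact hμ.memLp_minor S T
  · simp [minor_topLeft_eq_zero _ h]

lemma MinorOrthogonal.integral_minor_topLeft_mul {m n s r : ℕ} (hsm : s ≤ m) (hrn : r ≤ n)
    {c : ℝ} (hc : 0 ≤ c) {μ : Measure (Matrix (Fin s) (Fin r) ℝ)} (hμ : MinorOrthogonal μ)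
    (S U : Finset (Fin m)) (T V : Finset (Fin n)) :
    ∫ Q, minor (Real.sqrt c • topLeft Q : Matrix (Fin m) (Fin n) ℝ) S T *
        minor (Real.sqrt c • topLeft Q : Matrix (Fin m) (Fin n) ℝ) U V ∂μ =
      if S = U ∧ T = V then topLeftWeight s r c S T else 0 := by
  by_cases h : S.card = T.card ∧ (∀ i ∈ S, (i : ℕ) < s) ∧ ∀ j ∈ T, (j : ℕ) < r
  swap
  · have hz : ∀ Q : Matrix (Fin s) (Fin r) ℝ,
        minor (Real.sqrt c • topLeft Q : Matrix (Fin m) (Fin n) ℝ) S T = 0 := fun Q => by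
      rcases not_and_or.mp h with h | h
      · exact minor_of_card_ne _ h
      · rw [minor_smul, minor_topLeft_eq_zero _ h, mul_zero]
    simp [hz, topLeftWeight, h]
  by_cases h' : U.card = V.card ∧ (∀ i ∈ U, (i : ℕ) < s) ∧ ∀ j ∈ V, (j : ℕ) < r
  swap
  · have hz : ∀ Q : Matrix (Fin s) (Fin r) ℝ,
        minor (Real.sqrt c • topLeft Q : Matrix (Fin m) (Fin n) ℝ) U V = 0 := fun Q => by
      rcases not_and_or.mp h' with h | h
      · exact minor_of_card_ne _ h
      · rw [minor_smul, minor_topLeft_eq_zero _ h, mul_zero]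
    have hne : ¬ (S = U ∧ T = V) := by
      rintro ⟨rfl, rfl⟩
      exact h' h
    simp [hz, hne]
  rw [topLeftWeight, if_pos h]
  obtain ⟨hc₁, hS, hT⟩ := h
  obtain ⟨hc₂, hU, hV⟩ := h'
  obtain ⟨S, rfl⟩ := (Finset.exists_map_castLE_iff hsm S).mpr hS
  obtain ⟨T, rfl⟩ := (Finset.exists_map_castLE_iff hrn T).mpr hT
  obtain ⟨U, rfl⟩ := (Finset.exists_map_castLE_iff hsm U).mpr hU
  obtain ⟨V, rfl⟩ := (Finset.exists_map_castLE_iff hrn V).mpr hV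
  simp only [Finset.card_map] at hc₁ hc₂
  simp_rw [minor_smul, minor_topLeft_map, Finset.card_map, Finset.map_inj]
  have hfactor : ∀ Q : Matrix (Fin s) (Fin r) ℝ,
      Real.sqrt c ^ S.card * minor Q S T * (Real.sqrt c ^ U.card * minor Q U V) =
        (Real.sqrt c ^ S.card * Real.sqrt c ^ U.card) * (minor Q S T * minor Q U V) :=
    fun Q => by ring
  simp_rw [hfactor]
  rw [integral_const_mul, hμ S U T V hc₁ hc₂]
  split_ifs with heq
  · rw [← heq.1, ← mul_pow, Real.mul_self_sqrt hc, div_eq_mul_inv]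
  · rw [mul_zero]

/-- Second moment of a linear combination of orthogonal square-integrable functions. -/
lemma integrable_and_integral_sq_sum {Ω ι : Type*} [MeasurableSpace Ω] [DecidableEq ι]
    {μ : Measure Ω} (t : Finset ι) (a d : ι → ℝ) (g : ι → Ω → ℝ)
    (hg : ∀ z ∈ t, MemLp (g z) 2 μ)
    (h : ∀ z ∈ t, ∀ w ∈ t, ∫ ω, g z ω * g w ω ∂μ = if z = w then d z else 0) :
    Integrable (fun ω => (∑ z ∈ t, a z * g z ω) ^ 2) μ ∧
      ∫ ω, (∑ z ∈ t, a z * g z ω) ^ 2 ∂μ = ∑ z ∈ t, a z ^ 2 * d z := by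
  have hsq : ∀ ω, (∑ z ∈ t, a z * g z ω) ^ 2 =
      ∑ z ∈ t, ∑ w ∈ t, a z * a w * (g z ω * g w ω) := fun ω => by
    rw [sq, Finset.sum_mul_sum]
    exact Finset.sum_congr rfl fun z _ => Finset.sum_congr rfl fun w _ => by ring
  have hint : ∀ z ∈ t, ∀ w ∈ t, Integrable (fun ω => a z * a w * (g z ω * g w ω)) μ :=
    fun z hz w hw => ((hg z hz).integrable_mul (hg w hw)).const_mul _
  simp_rw [hsq]
  refine ⟨integrable_finsetSum _ fun z hz => integrable_finsetSum _ (hint z hz), ?_⟩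
  rw [integral_finsetSum _ fun z hz => integrable_finsetSum _ (hint z hz)]
  refine Finset.sum_congr rfl fun z hz => ?_
  rw [integral_finsetSum _ (hint z hz), Finset.sum_eq_single z]
  · rw [integral_const_mul, h z hz z hz, if_pos rfl, sq]
  · intro w hw hwz
    rw [integral_const_mul, h z hz w hw, if_neg hwz.symm, mul_zero]
  · exact fun hz' => absurd hz hz'

lemma MinorOrthogonal.integral_minor_add_sq {m n s r : ℕ} (hsm : s ≤ m) (hrn : r ≤ n)
    {c : ℝ} (hc : 0 ≤ c) (A : Matrix (Fin m) (Fin n) ℝ)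
    {μ : Measure (Matrix (Fin s) (Fin r) ℝ)} (hμ : MinorOrthogonal μ)
    {X : Finset (Fin m)} {Y : Finset (Fin n)} (h : X.card = Y.card) :
    Integrable (fun Q => minor (A + Real.sqrt c • topLeft Q) X Y ^ 2) μ ∧
      ∫ Q, minor (A + Real.sqrt c • topLeft Q) X Y ^ 2 ∂μ =
        ∑ P ∈ X.powerset, ∑ T ∈ Y.powerset,
          minor A P T ^ 2 * topLeftWeight s r c (X \ P) (Y \ T) := by
  obtain ⟨ε, hε, hadd⟩ := exists_minor_add_eq (X := X) (Y := Y) rfl h.symm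
  have key := integrable_and_integral_sq_sum (μ := μ) (X.powerset ×ˢ Y.powerset)
    (fun z => ε z.1 z.2 * minor A z.1 z.2)
    (fun z => topLeftWeight s r c (X \ z.1) (Y \ z.2))
    (fun z Q => minor (Real.sqrt c • topLeft Q : Matrix (Fin m) (Fin n) ℝ) (X \ z.1) (Y \ z.2))
    (fun z _ => hμ.memLp_minor_topLeft hsm hrn _ _ _)
    (fun z hz w hw => by
      rw [hμ.integral_minor_topLeft_mul hsm hrn hc]
      simp only [Finset.mem_product, Finset.mem_powerset] at hz hw
      have hcancel : ∀ {k : ℕ} {Z P P' : Finset (Fin k)}, P ⊆ Z → P' ⊆ Z →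
          (Z \ P = Z \ P' ↔ P = P') := fun hP hP' =>
        ⟨fun h => by rw [← Finset.sdiff_sdiff_eq_self hP, h, Finset.sdiff_sdiff_eq_self hP'],
          fun h => by rw [h]⟩
      simp only [hcancel hz.1 hw.1, hcancel hz.2 hw.2, Prod.ext_iff])
  have hexp : ∀ Q : Matrix (Fin s) (Fin r) ℝ, minor (A + Real.sqrt c • topLeft Q) X Y =
      ∑ z ∈ X.powerset ×ˢ Y.powerset, ε z.1 z.2 * minor A z.1 z.2 *
        minor (Real.sqrt c • topLeft Q : Matrix (Fin m) (Fin n) ℝ) (X \ z.1) (Y \ z.2) :=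
    fun Q => by simp_rw [hadd, Finset.sum_product, mul_assoc]
  simp_rw [hexp]
  refine ⟨key.1, key.2.trans ?_⟩
  simp_rw [Finset.sum_product, mul_pow, hε, one_mul]

lemma sum_powersetCard_sum_powerset {α M : Type*} [Fintype α] [DecidableEq α]
    [AddCommMonoid M] (i : ℕ) (H : Finset α → Finset α → M) :
    ∑ X ∈ Finset.univ.powersetCard i, ∑ P ∈ X.powerset, H P (X \ P) =
      ∑ P : Finset α, ∑ S : Finset α with Disjoint P S ∧ P.card + S.card = i, H P S := by
  rw [Finset.sum_sigma', Finset.sum_sigma']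
  refine Finset.sum_bij' (fun z _ => ⟨z.2, z.1 \ z.2⟩) (fun z _ => ⟨z.1 ∪ z.2, z.1⟩) ?_ ?_ ?_ ?_
    (fun _ _ => rfl)
  · rintro ⟨X, P⟩ h
    simp only [Finset.mem_sigma, Finset.mem_powersetCard, Finset.mem_powerset, Finset.mem_univ,
      Finset.mem_filter, true_and] at h ⊢
    refine ⟨Finset.disjoint_sdiff, ?_⟩
    rw [add_comm, Finset.card_sdiff_add_card_eq_card h.2, h.1.2]
  · rintro ⟨P, S⟩ h
    simp only [Finset.mem_sigma, Finset.mem_powersetCard, Finset.mem_powerset, Finset.mem_univ,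
      Finset.mem_filter, true_and] at h ⊢
    exact ⟨⟨Finset.subset_univ _, by rw [Finset.card_union_of_disjoint h.1, h.2]⟩,
      Finset.subset_union_left⟩
  · rintro ⟨X, P⟩ h
    simp only [Finset.mem_sigma, Finset.mem_powerset] at h
    simp [Finset.union_sdiff_of_subset h.2]
  · rintro ⟨P, S⟩ h
    simp only [Finset.mem_sigma, Finset.mem_filter, Finset.mem_univ, true_and] at h
    simp [Finset.union_sdiff_cancel_left h.1]

lemma card_filter_disjoint_lt {m s k i : ℕ} (hsm : s ≤ m) (P : Finset (Fin m))
    (hk : P.card + k = i) :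
    ((Finset.univ.filter fun S : Finset (Fin m) => Disjoint P S ∧ P.card + S.card = i).filter
      fun S : Finset (Fin m) => ∀ a ∈ S, (a : ℕ) < s).card =
    (s - (P.filter fun a : Fin m => (a : ℕ) < s).card).choose k := by
  have hset : ((Finset.univ.filter fun S : Finset (Fin m) =>
      Disjoint P S ∧ P.card + S.card = i).filter
        fun S : Finset (Fin m) => ∀ a ∈ S, (a : ℕ) < s) =
      ((Finset.univ.filter fun a : Fin m => (a : ℕ) < s) \
        P.filter fun a : Fin m => (a : ℕ) < s).powersetCard k := by
    ext S
    simp only [Finset.mem_filter, Finset.mem_univ, true_and, Finset.mem_powersetCard,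
      Finset.subset_iff, Finset.mem_sdiff, Finset.disjoint_right]
    have : P.card + S.card = i ↔ S.card = k := by omega
    rw [this]
    grind
  have hcard : (Finset.univ.filter fun a : Fin m => (a : ℕ) < s).card = s := by
    simp [Fin.card_filter_val_lt, hsm]
  rw [hset, Finset.card_powersetCard, Finset.card_sdiff_of_subset, hcard]
  exact Finset.filter_subset_filter _ (Finset.subset_univ _)

lemma sum_topLeftWeight {m n s r i k : ℕ} (hsm : s ≤ m) (hrn : r ≤ n) (c : ℝ)
    (P : Finset (Fin m)) (T : Finset (Fin n)) (hP : P.card + k = i) (hT : T.card + k = i) :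
    ∑ S : Finset (Fin m) with Disjoint P S ∧ P.card + S.card = i,
      ∑ U : Finset (Fin n) with Disjoint T U ∧ T.card + U.card = i, topLeftWeight s r c S U =
    (((s - (P.filter fun a : Fin m => (a : ℕ) < s).card).choose k *
      (r - (T.filter fun a : Fin n => (a : ℕ) < r).card).choose k : ℕ) : ℝ) /
        ((s.choose k : ℕ) : ℝ) * c ^ k := by
  have hterm : ∀ S : Finset (Fin m), ∀ U : Finset (Fin n),
      (Disjoint P S ∧ P.card + S.card = i) → (Disjoint T U ∧ T.card + U.card = i) →
      topLeftWeight s r c S U =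
        (if ∀ a ∈ S, (a : ℕ) < s then 1 else 0) * (if ∀ a ∈ U, (a : ℕ) < r then 1 else 0) *
          (c ^ k / ((s.choose k : ℕ) : ℝ)) := by
    intro S U hS hU
    have hSk : S.card = k := by omega
    have hUk : U.card = k := by omega
    simp only [topLeftWeight, hSk, hUk, true_and]
    split_ifs <;> simp_all
  rw [← card_filter_disjoint_lt hsm P hP, ← card_filter_disjoint_lt hrn T hT]
  calc _ = ∑ S : Finset (Fin m) with Disjoint P S ∧ P.card + S.card = i,
      ∑ U : Finset (Fin n) with Disjoint T U ∧ T.card + U.card = i,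
        (if ∀ a ∈ S, (a : ℕ) < s then (1 : ℝ) else 0) *
          (if ∀ a ∈ U, (a : ℕ) < r then 1 else 0) * (c ^ k / ((s.choose k : ℕ) : ℝ)) :=
        Finset.sum_congr rfl fun S hS => Finset.sum_congr rfl fun U hU =>
          hterm S U (Finset.mem_filter.mp hS).2 (Finset.mem_filter.mp hU).2
    _ = _ := by
        simp_rw [← Finset.sum_mul, ← Finset.mul_sum, ← Finset.sum_mul, Finset.sum_boole]
        push_cast
        ring

lemma card_filter_val_lt_le {m : ℕ} (P : Finset (Fin m)) (s : ℕ) :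
    (P.filter fun a : Fin m => (a : ℕ) < s).card ≤ s := by
  refine (Finset.card_le_card (Finset.filter_subset_filter _ (Finset.subset_univ P))).trans ?_
  simp [Fin.card_filter_val_lt]

/-- **Explicit coefficients of the expected characteristic polynomial** (extension of
Cohen's computation).  For a minor-orthogonal random `s × r` matrix `Q` embedded in the
top-left block `Q̃`, writing
`E[det(x·I + (A + √c·Q̃)ᵀ(A + √c·Q̃))] = Σᵢ x^{n−i} cᵢ(A)`, one has
`cᵢ(A) = Σ_{j,p,q} (binom(s−p, i−j)·binom(r−q, i−j)/binom(s, i−j))·c^{i−j}·A^j_{p,q}`. -/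
theorem expected_coeff_formula
    (m n s r : ℕ) (hn : 1 ≤ n) (hmn : n ≤ m) (hsm : s ≤ m) (hrs : r ≤ s) (hrn : r ≤ n)
    (c : ℝ) (hc : 0 ≤ c)
    (A : Matrix (Fin m) (Fin n) ℝ)
    (μ : Measure (Matrix (Fin s) (Fin r) ℝ)) [IsProbabilityMeasure μ]
    (hμ : MinorOrthogonal μ) :
    ∀ i : ℕ, i ≤ n →
      (∫ Q, (detXI ((A + Real.sqrt c • topLeft Q)ᵀ *
          (A + Real.sqrt c • topLeft Q))).coeff (n - i) ∂μ) =
      ∑ j ∈ Finset.range (i + 1), ∑ p ∈ Finset.range (s + 1), ∑ q ∈ Finset.range (r + 1),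
        (((s - p).choose (i - j) * (r - q).choose (i - j) : ℕ) : ℝ) /
            ((s.choose (i - j) : ℕ) : ℝ) *
          c ^ (i - j) * Apq A s r j p q := by
  intro i hi
  have hmom : ∀ X ∈ Finset.univ.powersetCard i, ∀ Y ∈ Finset.univ.powersetCard i, _ :=
    fun (X : Finset (Fin m)) hX (Y : Finset (Fin n)) hY =>
      hμ.integral_minor_add_sq hsm hrn hc A (X := X) (Y := Y) <|
        (Finset.mem_powersetCard.mp hX).2.trans (Finset.mem_powersetCard.mp hY).2.symm
  simp_rw [detXI_transpose_mul_self_coeff _ hi]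
  rw [integral_finsetSum _ fun X hX => integrable_finsetSum _ fun Y hY => (hmom X hX Y hY).1]
  have hlhs : ∀ X ∈ Finset.univ.powersetCard i,
      ∫ Q, ∑ Y ∈ Finset.univ.powersetCard i,
        minor (A + Real.sqrt c • topLeft Q) X Y ^ 2 ∂μ =
      ∑ P ∈ X.powerset, ∑ T : Finset (Fin n),
        ∑ U : Finset (Fin n) with Disjoint T U ∧ T.card + U.card = i,
          minor A P T ^ 2 * topLeftWeight s r c (X \ P) U := by
    intro X hX
    rw [integral_finsetSum _ fun Y hY => (hmom X hX Y hY).1,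
      Finset.sum_congr rfl fun Y hY => (hmom X hX Y hY).2, Finset.sum_comm]
    exact Finset.sum_congr rfl fun P _ => sum_powersetCard_sum_powerset i
      fun T U => minor A P T ^ 2 * topLeftWeight s r c (X \ P) U
  rw [Finset.sum_congr rfl hlhs, sum_powersetCard_sum_powerset i fun P S =>
    ∑ T : Finset (Fin n), ∑ U : Finset (Fin n) with Disjoint T U ∧ T.card + U.card = i,
      minor A P T ^ 2 * topLeftWeight s r c S U]
  simp_rw [Apq, Finset.mul_sum]
  simp_rw [Finset.sum_comm (t := (Finset.univ : Finset (Finset (Fin m)))),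
    Finset.sum_comm (t := (Finset.univ : Finset (Finset (Fin n))))]
  refine Finset.sum_congr rfl fun T _ => Finset.sum_congr rfl fun P _ => ?_
  simp_rw [← Finset.mul_sum]
  by_cases hcard : P.card = T.card ∧ P.card ≤ i
  · obtain ⟨hPT, hPi⟩ := hcard
    rw [sum_topLeftWeight (k := i - P.card) hsm hrn c P T (by omega) (by omega),
      Finset.sum_eq_single P.card,
      Finset.sum_eq_single (P.filter fun a : Fin m => (a : ℕ) < s).card,
      Finset.sum_eq_single (T.filter fun a : Fin n => (a : ℕ) < r).card]
    · rw [if_pos ⟨rfl, hPT.symm, rfl, rfl⟩, mul_comm]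
    · exact fun q _ hq => by rw [if_neg (fun h => hq h.2.2.2.symm), mul_zero]
    · exact fun hq => absurd (Finset.mem_range.mpr (Nat.lt_succ_of_le
        (card_filter_val_lt_le T r))) hq
    · exact fun p _ hp => Finset.sum_eq_zero fun q _ => by
        rw [if_neg (fun h => hp h.2.2.1.symm), mul_zero]
    · exact fun hp => absurd (Finset.mem_range.mpr (Nat.lt_succ_of_le
        (card_filter_val_lt_le P s))) hp
    · exact fun j _ hj => Finset.sum_eq_zero fun p _ => Finset.sum_eq_zero fun q _ => by
        rw [if_neg (fun h => hj h.1.symm), mul_zero]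
    · exact fun hj => absurd (Finset.mem_range.mpr (Nat.lt_succ_of_le hPi)) hj
  · have hrhs : ∀ j ∈ Finset.range (i + 1), ∀ p q : ℕ,
        ¬ (P.card = j ∧ T.card = j ∧ (P.filter fun a : Fin m => (a : ℕ) < s).card = p ∧
          (T.filter fun a : Fin n => (a : ℕ) < r).card = q) := by
      intro j hj p q h
      have := Finset.mem_range.mp hj
      exact hcard ⟨h.1.trans h.2.1.symm, by omega⟩
    rw [Finset.sum_eq_zero (s := Finset.range (i + 1)) fun j hj =>
      Finset.sum_eq_zero fun p _ => Finset.sum_eq_zero fun q _ => by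
        rw [if_neg (hrhs j hj p q), mul_zero]]
    rcases not_and_or.mp hcard with h | h
    · rw [minor_of_card_ne _ h]
      simp
    · have hempty : (Finset.univ.filter fun S : Finset (Fin m) =>
          Disjoint P S ∧ P.card + S.card = i) = ∅ :=
        Finset.filter_eq_empty_iff.mpr fun S _ hS => by omega
      rw [hempty, Finset.sum_empty, mul_zero]
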